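/- For every integer d ≥ 2, there exists a real number ε > 0 as follows: if G is a finite graph of maximum average degree at most d and choosability at most d−1, then G with any list assignment in which every list has size at least d is ε-flexible. -/

import Mathlib

def IsLColoring {V : Type*} (G : SimpleGraph V) (L : V → Finset ℕ) (φ : V → ℕ) : Prop :=
  (∀ v, φ v ∈ L v) ∧ ∀ ⦃u w : V⦄, G.Adj u w → φ u ≠ φ w

def EpsSat {V : Type*} (G : SimpleGraph V) (L : V → Finset ℕ) (D : Finset V)
    (r : V → ℕ) (ε : ℝ) : Prop :=
  ∃ φ : V → ℕ, IsLColoring G L φ ∧ ε * D.card ≤ ((D.filter fun v => φ v = r v).card : ℝ)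

def Flexible {V : Type*} (G : SimpleGraph V) (L : V → Finset ℕ) (ε : ℝ) : Prop :=
  ∀ (D : Finset V) (r : V → ℕ), (∀ v ∈ D, r v ∈ L v) → EpsSat G L D r ε

/-- The maximum average degree of `G` is at most `x`: every non-null subgraph `H`
satisfies `2|E(H)| ≤ x·|V(H)|`. -/
def MadLE {V : Type*} (G : SimpleGraph V) (x : ℝ) : Prop :=
  ∀ H : G.Subgraph, H.verts.Nonempty → 2 * (H.edgeSet.ncard : ℝ) ≤ x * H.verts.ncard

/-- The choosability of `G` is at most `k`. -/
def Choosable {V : Type*} (G : SimpleGraph V) (k : ℕ) : Prop :=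
  ∀ L : V → Finset ℕ, (∀ v, k ≤ (L v).card) → ∃ φ, IsLColoring G L φ

/-!
Let `D` be the set of requested vertices, and let `S ⊇ D` be a minimal set such that every
`L`-coloring of `G[S]` extends to `G`. A vertex of `S \ D` has at least `d` neighbors in `S`, since
otherwise it could be colored after the rest of `S`; as `G[S]` has average degree at most `d`, the
vertices of `D` then have average degree at most `d` in `G[S]`, and at least half of them have
degree at most `2d`.

Shrink all lists to size `d` and reserve a uniformly random color `f v ∈ L v` at every vertex. With
probability at least `1 / d^(2d+1)`, a requested vertex `v` of degree at most `2d` in `G[S]` is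
*clear*: its reserved color is not the requested color `r v`, and each of its neighbors in `S` with
`r v` in its list has reserved `r v`. Color `G` from the lists `L v \ {f v}`, of size `d - 1`; no
neighbor in `S` of a clear vertex `v` receives the color `r v`, so on `S` all the clear vertices may
be recolored at once as requested.
-/

open Finset

section Averaging

variable {ι : Type*}

theorem prod_le_pow_card_mul_prod [Fintype ι] {f g : ι → ℕ} {d : ℕ} (A : Finset ι)
    (hA : ∀ i ∈ A, f i ≤ d * g i) (hAc : ∀ i ∉ A, f i ≤ g i) :
    ∏ i, f i ≤ d ^ #A * ∏ i, g i := by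
  classical
  calc ∏ i, f i = (∏ i ∈ A, f i) * ∏ i ∈ Aᶜ, f i := (prod_mul_prod_compl A f).symm
    _ ≤ (∏ i ∈ A, d * g i) * ∏ i ∈ Aᶜ, g i :=
        Nat.mul_le_mul (prod_le_prod' hA) (prod_le_prod' fun i hi ↦ hAc i (mem_compl.1 hi))
    _ = d ^ #A * ∏ i, g i := by
        rw [prod_mul_distrib, prod_const, mul_assoc, prod_mul_prod_compl]

theorem sum_le_mul_card_of_le_on_sdiff [DecidableEq ι] {D S : Finset ι} {f : ι → ℕ} {d : ℕ}
    (hDS : D ⊆ S) (hsum : ∑ i ∈ S, f i ≤ d * #S) (hle : ∀ i ∈ S \ D, d ≤ f i) :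
    ∑ i ∈ D, f i ≤ d * #D := by
  have hrest : #(S \ D) * d ≤ ∑ i ∈ S \ D, f i := card_nsmul_le_sum _ _ _ hle
  rw [← sum_sdiff hDS, ← card_sdiff_add_card_eq_card hDS] at hsum
  linarith

theorem card_le_two_mul_card_filter_le_two_mul {D : Finset ι} {f : ι → ℕ} {d : ℕ}
    (h : ∑ i ∈ D, f i ≤ d * #D) : #D ≤ 2 * #{i ∈ D | f i ≤ 2 * d} := by
  have hlarge : #{i ∈ D | ¬f i ≤ 2 * d} * (2 * d + 1) ≤ d * #D :=
    calc #{i ∈ D | ¬f i ≤ 2 * d} * (2 * d + 1)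
        ≤ ∑ i ∈ D with ¬f i ≤ 2 * d, f i :=
          card_nsmul_le_sum _ f _ fun i hi ↦ Nat.lt_of_not_le (mem_filter.1 hi).2
      _ ≤ ∑ i ∈ D, f i := sum_le_sum_of_subset (filter_subset _ _)
      _ ≤ d * #D := h
  have hcard := card_filter_add_card_filter_not (s := D) (f · ≤ 2 * d)
  nlinarith

theorem exists_card_le_mul_card_filter {Ω : Type*} {X : Finset Ω} (hX : X.Nonempty) {D : Finset ι}
    {K : ℕ} {p : Ω → ι → Prop} [∀ x i, Decidable (p x i)]
    (h : ∀ i ∈ D, #X ≤ K * #{x ∈ X | p x i}) : ∃ x ∈ X, #D ≤ K * #{i ∈ D | p x i} := by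
  refine exists_le_of_sum_le hX ?_
  calc ∑ _x ∈ X, #D = ∑ _i ∈ D, #X := by simp only [sum_const, smul_eq_mul, mul_comm]
    _ ≤ ∑ i ∈ D, K * #{x ∈ X | p x i} := sum_le_sum h
    _ = ∑ x ∈ X, K * #{i ∈ D | p x i} := by
      simp only [← mul_sum]
      exact congrArg (K * ·) (sum_card_bipartiteAbove_eq_sum_card_bipartiteBelow p).symm

end Averaging

section Flexibility

variable {V : Type*} {G : SimpleGraph V} {L : V → Finset ℕ}

theorem sum_card_filter_adj_eq_two_mul_ncard_edgeSet_induce [DecidableRel G.Adj] (S : Finset V) :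
    ∑ v ∈ S, #{u ∈ S | G.Adj v u} = 2 * (G.induce (S : Set V)).edgeSet.ncard := by
  classical
  have hdeg (v : S) : (G.induce (S : Set V)).degree v = #{u ∈ S | G.Adj v u} := by
    rw [← SimpleGraph.card_neighborFinset_eq_degree,
      ← card_map (Function.Embedding.subtype (· ∈ S))]
    congr 1
    ext u
    simp [and_comm]
  rw [← SimpleGraph.coe_edgeFinset, Set.ncard_coe_finset,
    ← SimpleGraph.sum_degrees_eq_twice_card_edges, ← sum_coe_sort]
  exact (sum_congr rfl fun v _ ↦ hdeg v).symm

theorem MadLE.two_mul_ncard_edgeSet_induce_le {x : ℝ} (hG : MadLE G x) {S : Set V}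
    (hS : S.Nonempty) : 2 * ((G.induce S).edgeSet.ncard : ℝ) ≤ x * S.ncard := by
  let H : G.Subgraph := (⊤ : G.Subgraph).induce S
  have hedge : H.edgeSet.ncard = (G.induce S).edgeSet.ncard := by
    rw [← H.image_coe_edgeSet_coe,
      Set.ncard_image_of_injective _ (Sym2.map.injective Subtype.val_injective),
      G.induce_eq_coe_induce_top]
    rfl
  rw [← hedge]
  exact hG H hS

theorem MadLE.sum_card_filter_adj_le [DecidableRel G.Adj] {x : ℝ} (hG : MadLE G x)
    (S : Finset V) : ((∑ v ∈ S, #{u ∈ S | G.Adj v u} : ℕ) : ℝ) ≤ x * #S := by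
  obtain rfl | hS := S.eq_empty_or_nonempty
  · simp
  · rw [sum_card_filter_adj_eq_two_mul_ncard_edgeSet_induce, Nat.cast_mul, Nat.cast_ofNat,
      ← Set.ncard_coe_finset]
    exact hG.two_mul_ncard_edgeSet_induce_le (coe_nonempty.2 hS)

theorem IsLColoring.mono {M : V → Finset ℕ} {φ : V → ℕ} (hφ : IsLColoring G M φ)
    (hML : ∀ v, M v ⊆ L v) : IsLColoring G L φ :=
  ⟨fun v ↦ hML v (hφ.1 v), hφ.2⟩

theorem flexible_of_forall_card_eq {d : ℕ} (hd : 0 < d) {ε : ℝ} (hL : ∀ v, d ≤ #(L v))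
    (h : ∀ M : V → Finset ℕ, (∀ v, #(M v) = d) → Flexible G M ε) : Flexible G L ε := by
  intro D r hr
  have hsub (v : V) : ∃ M ⊆ L v, #M = d ∧ (v ∈ D → r v ∈ M) := by
    by_cases hv : v ∈ D
    · obtain ⟨M, hrM, hML, hM⟩ := exists_subsuperset_card_eq
        (singleton_subset_iff.2 (hr v hv)) (by rwa [card_singleton]) (hL v)
      exact ⟨M, hML, hM, fun _ ↦ singleton_subset_iff.1 hrM⟩
    · obtain ⟨M, hML, hM⟩ := exists_subset_card_eq (hL v)
      exact ⟨M, hML, hM, fun hv' ↦ absurd hv' hv⟩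
  choose M hML hM hrM using hsub
  obtain ⟨φ, hφ, hsat⟩ := h M hM D r hrM
  exact ⟨φ, hφ.mono hML, hsat⟩

/-- The restriction of `ψ` to `S` is an `L`-coloring of the induced subgraph `G[S]`; the values of
`ψ` outside `S` are irrelevant. -/
def IsLColoringOn (G : SimpleGraph V) (L : V → Finset ℕ) (S : Finset V) (ψ : V → ℕ) : Prop :=
  (∀ v ∈ S, ψ v ∈ L v) ∧ ∀ u ∈ S, ∀ w ∈ S, G.Adj u w → ψ u ≠ ψ w

/-- Every `L`-coloring of the induced subgraph `G[S]` extends to an `L`-coloring of `G`, so that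
requests on `S` need only be satisfied by a coloring of `G[S]`. -/
def ExtendsFrom (G : SimpleGraph V) (L : V → Finset ℕ) (S : Finset V) : Prop :=
  ∀ ψ, IsLColoringOn G L S ψ → ∃ φ, IsLColoring G L φ ∧ ∀ v ∈ S, φ v = ψ v

theorem extendsFrom_univ [Fintype V] : ExtendsFrom G L univ := fun ψ hψ ↦
  ⟨ψ, ⟨fun v ↦ hψ.1 v (mem_univ v), fun u w ↦ hψ.2 u (mem_univ u) w (mem_univ w)⟩, fun _ _ ↦ rfl⟩

theorem IsLColoringOn.update [DecidableEq V] {S : Finset V} {ψ : V → ℕ} {t : V} {c : ℕ}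
    (hψ : IsLColoringOn G L (S.erase t) ψ) (hc : c ∈ L t)
    (hne : ∀ u ∈ S, G.Adj t u → ψ u ≠ c) : IsLColoringOn G L S (Function.update ψ t c) := by
  refine ⟨fun v hv ↦ ?_, fun u hu w hw huw ↦ ?_⟩
  · obtain rfl | hvt := eq_or_ne v t
    · rwa [Function.update_self]
    · rw [Function.update_of_ne hvt]
      exact hψ.1 v (mem_erase.2 ⟨hvt, hv⟩)
  · obtain rfl | hut := eq_or_ne u t
    · rw [Function.update_self, Function.update_of_ne huw.ne']
      exact (hne w hw huw).symm
    obtain rfl | hwt := eq_or_ne w t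
    · rw [Function.update_self, Function.update_of_ne hut]
      exact hne u hu huw.symm
    · rw [Function.update_of_ne hut, Function.update_of_ne hwt]
      exact hψ.2 u (mem_erase.2 ⟨hut, hu⟩) w (mem_erase.2 ⟨hwt, hw⟩) huw

theorem ExtendsFrom.erase [DecidableEq V] [DecidableRel G.Adj] {S : Finset V} {t : V}
    (hS : ExtendsFrom G L S) (ht : #{u ∈ S | G.Adj t u} < #(L t)) :
    ExtendsFrom G L (S.erase t) := by
  intro ψ hψ
  obtain ⟨c, hcL, hc⟩ : ∃ c ∈ L t, c ∉ image ψ {u ∈ S | G.Adj t u} :=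
    exists_mem_notMem_of_card_lt_card (card_image_le.trans_lt ht)
  have hne : ∀ u ∈ S, G.Adj t u → ψ u ≠ c := fun u hu htu huc ↦
    hc (mem_image.2 ⟨u, mem_filter.2 ⟨hu, htu⟩, huc⟩)
  obtain ⟨φ, hφ, hφS⟩ := hS _ (hψ.update hcL hne)
  refine ⟨φ, hφ, fun v hv ↦ ?_⟩
  rw [hφS v (mem_of_mem_erase hv), Function.update_of_ne (ne_of_mem_erase hv)]

theorem exists_extendsFrom_card_le_card_filter_adj [Finite V] [DecidableEq V] [DecidableRel G.Adj]
    (L : V → Finset ℕ) (D : Finset V) :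
    ∃ S, D ⊆ S ∧ ExtendsFrom G L S ∧ ∀ t ∈ S \ D, #(L t) ≤ #{u ∈ S | G.Adj t u} := by
  cases nonempty_fintype V
  obtain ⟨S, ⟨hDS, hS⟩, hmin⟩ := exists_minimal_of_wellFoundedLT
    (fun S ↦ D ⊆ S ∧ ExtendsFrom G L S) ⟨univ, subset_univ D, extendsFrom_univ⟩
  refine ⟨S, hDS, hS, fun t ht ↦ not_lt.1 fun hlt ↦ ?_⟩
  obtain ⟨htS, htD⟩ := mem_sdiff.1 ht
  exact notMem_erase t S <|
    hmin ⟨subset_erase.2 ⟨hDS, htD⟩, hS.erase hlt⟩ (erase_subset t S) htS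

theorem MadLE.exists_extendsFrom_card_le [Finite V] [DecidableRel G.Adj] {d : ℕ}
    (hG : MadLE G d) (hL : ∀ v, d ≤ #(L v)) (D : Finset V) :
    ∃ S, D ⊆ S ∧ ExtendsFrom G L S ∧
      #D ≤ 2 * #{v ∈ D | #{u ∈ S | G.Adj v u} ≤ 2 * d} := by
  classical
  obtain ⟨S, hDS, hS, hdeg⟩ := exists_extendsFrom_card_le_card_filter_adj (G := G) L D
  have hsumS : ∑ v ∈ S, #{u ∈ S | G.Adj v u} ≤ d * #S := by
    exact_mod_cast hG.sum_card_filter_adj_le S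
  have hsumD := sum_le_mul_card_of_le_on_sdiff hDS hsumS fun t ht ↦ (hL t).trans (hdeg t ht)
  exact ⟨S, hDS, hS, card_le_two_mul_card_filter_le_two_mul hsumD⟩

/-- The vertex `v` is clear of the color `c` when the color `f u` is reserved at every vertex `u`:
`c` is not reserved at `v`, and every neighbor of `v` in `S` whose list contains `c` has reserved
it. A coloring that avoids all reserved colors then leaves `c` free for `v` within `S`. -/
def IsClear (G : SimpleGraph V) (L : V → Finset ℕ) (S : Finset V) (f : V → ℕ) (v : V) (c : ℕ) :
    Prop :=
  f v ≠ c ∧ ∀ u ∈ S, G.Adj v u → c ∈ L u → f u = c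

/-- The sublists of `L` that force `v` to be clear of `c`, whichever colors are reserved from
them. -/
def clearingLists [DecidableEq V] (G : SimpleGraph V) [DecidableRel G.Adj] (L : V → Finset ℕ)
    (S : Finset V) (v : V) (c : ℕ) (u : V) : Finset ℕ :=
  if u = v then (L v).erase c
  else if u ∈ S ∧ G.Adj v u ∧ c ∈ L u then {c}
  else L u

section clearingLists

variable [DecidableEq V] [DecidableRel G.Adj] {S : Finset V} {u v : V} {c : ℕ}

theorem clearingLists_self : clearingLists G L S v c v = (L v).erase c := if_pos rfl

theorem clearingLists_of_adj (hu : u ∈ S) (hvu : G.Adj v u) (hc : c ∈ L u) :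
    clearingLists G L S v c u = {c} := by
  rw [clearingLists, if_neg hvu.ne', if_pos ⟨hu, hvu, hc⟩]

theorem clearingLists_subset : clearingLists G L S v c u ⊆ L u := by
  unfold clearingLists
  split_ifs with huv hu
  · exact huv ▸ erase_subset c (L v)
  · exact singleton_subset_iff.2 hu.2.2
  · exact Subset.rfl

theorem isClear_of_forall_mem_clearingLists {f : V → ℕ}
    (hf : ∀ u, f u ∈ clearingLists G L S v c u) : IsClear G L S f v c :=
  ⟨ne_of_mem_erase (clearingLists_self (G := G) ▸ hf v), fun u hu hvu hc ↦
    mem_singleton.1 (clearingLists_of_adj hu hvu hc ▸ hf u)⟩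

theorem prod_card_le_pow_mul_prod_card_clearingLists [Fintype V] {d k : ℕ} (hL : ∀ u, #(L u) ≤ d)
    (hv : 2 ≤ #(L v)) (hS : #{u ∈ S | G.Adj v u} ≤ k) :
    ∏ u, #(L u) ≤ d ^ (k + 1) * ∏ u, #(clearingLists G L S v c u) := by
  have hd : 0 < d := two_pos.trans_le (hv.trans (hL v))
  set A : Finset V := insert v {u ∈ S | G.Adj v u}
  have hA : #A ≤ k + 1 := (card_insert_le _ _).trans (Nat.succ_le_succ hS)
  have hle (u : V) : #(L u) ≤ d * #(clearingLists G L S v c u) := by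
    unfold clearingLists
    split_ifs with huv
    · have hpos : 0 < #((L v).erase c) :=
        (Nat.sub_pos_of_lt hv).trans_le pred_card_le_card_erase
      exact (hL u).trans (Nat.le_mul_of_pos_right d hpos)
    · exact (hL u).trans_eq (by rw [card_singleton, mul_one])
    · exact Nat.le_mul_of_pos_left _ hd
  have heq : ∀ u ∉ A, #(L u) ≤ #(clearingLists G L S v c u) := by
    intro u hu
    simp only [A, mem_insert, mem_filter, not_or] at hu
    rw [clearingLists, if_neg hu.1, if_neg fun h ↦ hu.2 ⟨h.1, h.2.1⟩]
  calc ∏ u, #(L u) ≤ d ^ #A * ∏ u, #(clearingLists G L S v c u) :=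
        prod_le_pow_card_mul_prod A (fun u _ ↦ hle u) heq
    _ ≤ d ^ (k + 1) * ∏ u, #(clearingLists G L S v c u) := by gcongr

end clearingLists

open scoped Classical in
theorem card_piFinset_le_pow_mul_card_filter_isClear [Fintype V] {d k : ℕ} {S : Finset V} {v : V}
    (hL : ∀ u, #(L u) ≤ d) (hv : 2 ≤ #(L v)) (hS : #{u ∈ S | G.Adj v u} ≤ k) (c : ℕ) :
    #(Fintype.piFinset L) ≤
      d ^ (k + 1) * #{f ∈ Fintype.piFinset L | IsClear G L S f v c} := by
  have hsub : Fintype.piFinset (clearingLists G L S v c) ⊆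
      {f ∈ Fintype.piFinset L | IsClear G L S f v c} := fun f hf ↦
    have hf := Fintype.mem_piFinset.1 hf
    mem_filter.2 ⟨Fintype.mem_piFinset.2 fun u ↦ clearingLists_subset (hf u),
      isClear_of_forall_mem_clearingLists hf⟩
  calc #(Fintype.piFinset L) = ∏ u, #(L u) := Fintype.card_piFinset L
    _ ≤ d ^ (k + 1) * ∏ u, #(clearingLists G L S v c u) :=
        prod_card_le_pow_mul_prod_card_clearingLists hL hv hS
    _ = d ^ (k + 1) * #(Fintype.piFinset (clearingLists G L S v c)) := by
        rw [Fintype.card_piFinset]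
    _ ≤ d ^ (k + 1) * #{f ∈ Fintype.piFinset L | IsClear G L S f v c} := by gcongr

open scoped Classical in
theorem exists_card_le_pow_mul_card_filter_isClear [Finite V] {d k : ℕ} {S D : Finset V}
    (hL : ∀ v, #(L v) ≤ d) (hL' : ∀ v, 2 ≤ #(L v))
    (hD : ∀ v ∈ D, #{u ∈ S | G.Adj v u} ≤ k) (r : V → ℕ) :
    ∃ f : V → ℕ, #D ≤ d ^ (k + 1) * #{v ∈ D | IsClear G L S f v (r v)} := by
  cases nonempty_fintype V
  have hX : (Fintype.piFinset L).Nonempty :=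
    Fintype.piFinset_nonempty.2 fun v ↦ card_pos.1 (two_pos.trans_le (hL' v))
  obtain ⟨f, -, hcard⟩ := exists_card_le_mul_card_filter hX fun v hv ↦
    card_piFinset_le_pow_mul_card_filter_isClear hL (hL' v) (hD v hv) (r v)
  exact ⟨f, hcard⟩

theorem Choosable.exists_isLColoring_avoiding {k : ℕ} (hG : Choosable G k)
    (hL : ∀ v, k < #(L v)) (f : V → ℕ) : ∃ φ, IsLColoring G L φ ∧ ∀ v, φ v ≠ f v := by
  obtain ⟨φ, hφ, hproper⟩ := hG (fun v ↦ (L v).erase (f v)) fun v ↦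
    (Nat.le_sub_one_of_lt (hL v)).trans pred_card_le_card_erase
  exact ⟨φ, ⟨fun v ↦ mem_of_mem_erase (hφ v), hproper⟩, fun v ↦ ne_of_mem_erase (hφ v)⟩

theorem IsClear.ne {S : Finset V} {f φ : V → ℕ} {u v : V} {c : ℕ} (hv : IsClear G L S f v c)
    (hφL : φ u ∈ L u) (hφf : φ u ≠ f u) (hu : u ∈ S) (hvu : G.Adj v u) : φ u ≠ c := by
  rintro rfl
  exact hφf (hv.2 u hu hvu hφL).symm

theorem IsLColoring.isLColoringOn_piecewise [DecidableEq V] {S T : Finset V} {f r φ : V → ℕ}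
    (hφ : IsLColoring G L φ) (hφf : ∀ v, φ v ≠ f v) (hr : ∀ v ∈ T, r v ∈ L v)
    (hT : ∀ v ∈ T, IsClear G L S f v (r v)) : IsLColoringOn G L S (T.piecewise r φ) := by
  refine ⟨fun v _ ↦ ?_, fun u hu w hw huw ↦ ?_⟩
  · by_cases hv : v ∈ T
    · simpa only [piecewise_eq_of_mem _ _ _ hv] using hr v hv
    · simpa only [piecewise_eq_of_notMem _ _ _ hv] using hφ.1 v
  by_cases huT : u ∈ T <;> by_cases hwT : w ∈ T <;>
    simp only [piecewise_eq_of_mem, piecewise_eq_of_notMem, huT, hwT, not_false_eq_true]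
  -- `r` itself avoids the reserved colors on `T`, so clearness also separates two vertices of `T`.
  · exact ((hT u huT).ne (hr w hwT) (hT w hwT).1.symm hw huw).symm
  · exact ((hT u huT).ne (hφ.1 w) (hφf w) hw huw).symm
  · exact (hT w hwT).ne (hφ.1 u) (hφf u) hu huw.symm
  · exact hφ.2 huw

theorem ExtendsFrom.exists_isLColoring_eq_on {k : ℕ} {S T : Finset V} {f r : V → ℕ}
    (hS : ExtendsFrom G L S) (hG : Choosable G k) (hL : ∀ v, k < #(L v)) (hTS : T ⊆ S)
    (hr : ∀ v ∈ T, r v ∈ L v) (hT : ∀ v ∈ T, IsClear G L S f v (r v)) :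
    ∃ φ, IsLColoring G L φ ∧ ∀ v ∈ T, φ v = r v := by
  classical
  obtain ⟨φ, hφ, hφf⟩ := hG.exists_isLColoring_avoiding hL f
  obtain ⟨χ, hχ, hχS⟩ := hS _ (hφ.isLColoringOn_piecewise hφf hr hT)
  exact ⟨χ, hχ, fun v hv ↦ (hχS v (hTS hv)).trans (piecewise_eq_of_mem _ _ _ hv)⟩

theorem exists_isLColoring_card_le [Finite V] {d : ℕ} (hd : 2 ≤ d) (hG : MadLE G d)
    (hch : Choosable G (d - 1)) (hL : ∀ v, #(L v) = d) {D : Finset V} {r : V → ℕ}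
    (hr : ∀ v ∈ D, r v ∈ L v) :
    ∃ φ, IsLColoring G L φ ∧ #D ≤ 2 * d ^ (2 * d + 1) * #{v ∈ D | φ v = r v} := by
  classical
  obtain ⟨S, hDS, hS, hlow⟩ := hG.exists_extendsFrom_card_le (fun v ↦ (hL v).ge) D
  set D' : Finset V := {v ∈ D | #{u ∈ S | G.Adj v u} ≤ 2 * d}
  obtain ⟨f, hclear⟩ := exists_card_le_pow_mul_card_filter_isClear (D := D')
    (fun v ↦ (hL v).le) (fun v ↦ hd.trans (hL v).ge) (fun v hv ↦ (mem_filter.1 hv).2) r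
  set T : Finset V := {v ∈ D' | IsClear G L S f v (r v)}
  have hTD : T ⊆ D := (filter_subset _ _).trans (filter_subset _ _)
  obtain ⟨φ, hφ, hφT⟩ := hS.exists_isLColoring_eq_on hch (fun v ↦ by rw [hL v]; omega)
    (hTD.trans hDS) (fun v hv ↦ hr v (hTD hv)) fun v hv ↦ (mem_filter.1 hv).2
  have hT : #T ≤ #{v ∈ D | φ v = r v} :=
    card_le_card fun v hv ↦ mem_filter.2 ⟨hTD hv, hφT v hv⟩
  refine ⟨φ, hφ, ?_⟩
  calc #D ≤ 2 * #D' := hlow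
    _ ≤ 2 * (d ^ (2 * d + 1) * #T) := by gcongr
    _ = 2 * d ^ (2 * d + 1) * #T := (mul_assoc _ _ _).symm
    _ ≤ _ := by gcongr

theorem stmt3_general [Finite V] {d : ℕ} (hd : 2 ≤ d) (hG : MadLE G d)
    (hch : Choosable G (d - 1)) (hL : ∀ v, d ≤ #(L v)) :
    Flexible G L (2 * (d : ℝ) ^ (2 * d + 1))⁻¹ := by
  refine flexible_of_forall_card_eq (by omega) hL fun M hM D r hr ↦ ?_
  obtain ⟨φ, hφ, hcard⟩ := exists_isLColoring_card_le hd hG hch hM hr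
  refine ⟨φ, hφ, ?_⟩
  rw [inv_mul_le_iff₀ (by positivity)]
  exact_mod_cast hcard

end Flexibility

theorem stmt3 (d : ℕ) (hd : 2 ≤ d) :
    ∃ ε : ℝ, 0 < ε ∧
      ∀ (V : Type) [Fintype V] (G : SimpleGraph V) (L : V → Finset ℕ),
        MadLE G d → Choosable G (d - 1) → (∀ v, d ≤ (L v).card) → Flexible G L ε := by
  exact ⟨(2 * (d : ℝ) ^ (2 * d + 1))⁻¹, by positivity, fun _ _ _ _ ↦ stmt3_general hd⟩
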